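/- Let (X,d) be a nonempty compact metric space, P(X) its space of Borel probability measures with the Kantorovich metric, and Fix(P(X)) the set of measures invariant under all pushforwards by surjective isometries of X. Then the map Ψ: Fix(P(X)) → P(X^{(1)}), μ ↦ μ ∘ π^{-1} (pushforward under the orbit projection π: X → X^{(1)}), is an affine isometry of Fix(P(X)) onto P(X^{(1)}), where P(X^{(1)}) carries the Kantorovich metric of d^{(1)}. In particular δ(Fix(P(X))) = δ(X^{(1)}). -/

import Mathlib

/-!
The isometry group of `X` is compact, so it carries a bi-invariant probability measure. Moving a
point `x` by a random isometry gives the invariant probability measure on the orbit of `x`. This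
measure depends only on the orbit, so it defines a kernel from the orbit space back to `X`, and
integrating that kernel against `ρ` produces the unique invariant measure lying over `ρ`.

The average of a `1`-Lipschitz function over isometries is invariant and `1`-Lipschitz, hence
`1`-Lipschitz on the orbit space by the very definition of the greatest quotient metric. Therefore
lifting measures does not increase the Kantorovich distance; neither does pushing them forward along
the nonexpansive orbit projection. Finally, the diameter of `P(Q)` is that of `Q`, because Dirac
masses embed `Q` in `P(Q)`.
-/

open MeasureTheory
open scoped NNReal

/-- The Kantorovich distance between two Borel measures. -/
noncomputable def kantorovichDist {X : Type*} [MetricSpace X] [MeasurableSpace X]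
    (μ ν : Measure X) : ℝ :=
  sSup {r : ℝ | ∃ f : X → ℝ, LipschitzWith 1 f ∧
    r = |(∫ x, f x ∂μ) - ∫ x, f x ∂ν|}

/-- The greatest quotient metric d⁽¹⁾ on the orbit space X⁽¹⁾, on representatives. -/
noncomputable def orbitDist {X : Type*} [MetricSpace X] (x y : X) : ℝ :=
  sSup {r : ℝ | ∃ f : X → ℝ, LipschitzWith 1 f ∧
    (∀ (Φ : X ≃ᵢ X) (a : X), f (Φ a) = f a) ∧ r = |f x - f y|}

open ProbabilityTheory Set TopologicalSpace
open MeasureTheory.Measure (haarMeasure)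

section Kantorovich

lemma integral_sub_integral_le_of_forall_sub_le {α : Type*} [MeasurableSpace α]
    {μ ν : Measure α} [IsProbabilityMeasure μ] [IsProbabilityMeasure ν] {f : α → ℝ} {C : ℝ}
    (hμ : Integrable f μ) (hν : Integrable f ν) (hC : ∀ x y, f x - f y ≤ C) :
    (∫ x, f x ∂μ) - ∫ x, f x ∂ν ≤ C := by
  have hle (x : α) : f x ≤ (∫ y, f y ∂ν) + C := by
    have h := integral_mono (integrable_const (f x - C)) hν fun y ↦ by linarith [hC x y]
    simp only [integral_const, probReal_univ, one_smul] at h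
    linarith
  have h := integral_mono hμ (integrable_const _) hle
  simp only [integral_const, probReal_univ, one_smul] at h
  linarith

lemma abs_sub_le_dist_of_lipschitzWith_one {α : Type*} [PseudoMetricSpace α] {f : α → ℝ}
    (hf : LipschitzWith 1 f) (x y : α) : |f x - f y| ≤ dist x y := by
  simpa [Real.dist_eq] using hf.dist_le_mul x y

lemma integrable_of_lipschitzWith {α : Type*} [PseudoMetricSpace α] [BoundedSpace α]
    [MeasurableSpace α] [OpensMeasurableSpace α] {f : α → ℝ} {K : ℝ≥0}
    (hf : LipschitzWith K f) (μ : Measure α) [IsFiniteMeasure μ] : Integrable f μ := by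
  obtain ⟨C, hC⟩ := (hf.isBounded_image (Bornology.IsBounded.all univ)).exists_norm_le
  exact .of_bound hf.continuous.aestronglyMeasurable C
    (.of_forall fun x ↦ hC _ (mem_image_of_mem f (mem_univ x)))

variable {X Y : Type*} [MetricSpace X] [MeasurableSpace X] [MetricSpace Y] [MeasurableSpace Y]

lemma kantorovichDist_nonneg (μ ν : Measure X) : 0 ≤ kantorovichDist μ ν := by
  refine Real.sSup_nonneg ?_
  rintro _ ⟨f, -, rfl⟩
  exact abs_nonneg _

lemma kantorovichDist_le {μ ν : Measure X} {C : ℝ}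
    (hC : ∀ f : X → ℝ, LipschitzWith 1 f → |(∫ x, f x ∂μ) - ∫ x, f x ∂ν| ≤ C) :
    kantorovichDist μ ν ≤ C := by
  refine csSup_le ⟨_, fun _ ↦ 0, .const' 0, rfl⟩ ?_
  rintro _ ⟨f, hf, rfl⟩
  exact hC f hf

variable [BoundedSpace X] [OpensMeasurableSpace X] (μ ν : Measure X)
  [IsProbabilityMeasure μ] [IsProbabilityMeasure ν]

lemma abs_integral_sub_integral_le_diam {f : X → ℝ} (hf : LipschitzWith 1 f) :
    |(∫ x, f x ∂μ) - ∫ x, f x ∂ν| ≤ Metric.diam (univ : Set X) := by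
  have hdiam (x y : X) : f x - f y ≤ Metric.diam (univ : Set X) :=
    (le_abs_self _).trans <| (abs_sub_le_dist_of_lipschitzWith_one hf x y).trans <|
      Metric.dist_le_diam_of_mem (Bornology.IsBounded.all univ) (mem_univ x) (mem_univ y)
  have hμ := integrable_of_lipschitzWith hf μ
  have hν := integrable_of_lipschitzWith hf ν
  exact abs_sub_le_iff.2 ⟨integral_sub_integral_le_of_forall_sub_le hμ hν hdiam,
    integral_sub_integral_le_of_forall_sub_le hν hμ hdiam⟩

lemma kantorovichDist_le_diam : kantorovichDist μ ν ≤ Metric.diam (univ : Set X) :=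
  kantorovichDist_le fun _ ↦ abs_integral_sub_integral_le_diam μ ν

lemma abs_integral_sub_integral_le_kantorovichDist {f : X → ℝ} (hf : LipschitzWith 1 f) :
    |(∫ x, f x ∂μ) - ∫ x, f x ∂ν| ≤ kantorovichDist μ ν := by
  refine le_csSup ⟨Metric.diam (univ : Set X), ?_⟩ ⟨f, hf, rfl⟩
  rintro _ ⟨f, hf, rfl⟩
  exact abs_integral_sub_integral_le_diam μ ν hf

lemma dist_le_kantorovichDist_dirac (x y : X) :
    dist x y ≤ kantorovichDist (.dirac x) (.dirac y) := by
  simpa using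
    abs_integral_sub_integral_le_kantorovichDist (.dirac x) (.dirac y) (LipschitzWith.dist_left y)

variable (X) in
theorem sSup_kantorovichDist_eq_diam :
    sSup {r : ℝ | ∃ μ ν : Measure X, IsProbabilityMeasure μ ∧ IsProbabilityMeasure ν ∧
      r = kantorovichDist μ ν} = Metric.diam (univ : Set X) := by
  have hle : ∀ r ∈ {r : ℝ | ∃ μ ν : Measure X, IsProbabilityMeasure μ ∧
      IsProbabilityMeasure ν ∧ r = kantorovichDist μ ν}, r ≤ Metric.diam (univ : Set X) := by
    rintro _ ⟨μ, ν, hμ, hν, rfl⟩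
    exact kantorovichDist_le_diam μ ν
  refine le_antisymm (Real.sSup_le hle Metric.diam_nonneg) ?_
  refine Metric.diam_le_of_forall_dist_le (Real.sSup_nonneg ?_) fun x _ y _ ↦ ?_
  · rintro _ ⟨μ, ν, -, -, rfl⟩
    exact kantorovichDist_nonneg μ ν
  · exact (dist_le_kantorovichDist_dirac x y).trans
      (le_csSup ⟨_, hle⟩ ⟨_, _, inferInstance, inferInstance, rfl⟩)

lemma kantorovichDist_map_le [BorelSpace Y] {φ : X → Y} (hφ : LipschitzWith 1 φ) :
    kantorovichDist (μ.map φ) (ν.map φ) ≤ kantorovichDist μ ν := by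
  refine kantorovichDist_le fun f hf ↦ ?_
  have hmap (ρ : Measure X) : ∫ y, f y ∂(ρ.map φ) = ∫ x, f (φ x) ∂ρ :=
    integral_map hφ.continuous.measurable.aemeasurable hf.continuous.aestronglyMeasurable
  rw [hmap μ, hmap ν]
  refine abs_integral_sub_integral_le_kantorovichDist μ ν (f := f ∘ φ) ?_
  simpa using hf.comp hφ

lemma kantorovichDist_comp_le [BoundedSpace Y] [OpensMeasurableSpace Y] {κ : Kernel X Y}
    [IsMarkovKernel κ]
    (hκ : ∀ f : Y → ℝ, LipschitzWith 1 f → LipschitzWith 1 fun x ↦ ∫ y, f y ∂κ x) :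
    kantorovichDist (κ ∘ₘ μ) (κ ∘ₘ ν) ≤ kantorovichDist μ ν := by
  refine kantorovichDist_le fun f hf ↦ ?_
  have hcomp (ρ : Measure X) [IsProbabilityMeasure ρ] :
      ∫ y, f y ∂(κ ∘ₘ ρ) = ∫ x, ∫ y, f y ∂κ x ∂ρ := by
    have hf_int := integrable_of_lipschitzWith hf (κ ∘ₘ ρ)
    rw [Measure.comp_eq_comp_const_apply] at hf_int ⊢
    simpa using Kernel.integral_comp hf_int
  rw [hcomp μ, hcomp ν]
  exact abs_integral_sub_integral_le_kantorovichDist μ ν (hκ f hf)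

end Kantorovich

section OrbitKernel

variable {G X : Type*} [Group G] [MeasurableSpace G] [MulAction G X] [MeasurableSpace X]
  [MeasurableSMul₂ G X] (m : Measure G)

/-- The kernel sending `x` to the distribution of `g • x` for a random group element `g` of law
`m`. When `m` is a bi-invariant probability measure, this is the invariant probability measure
carried by the orbit of `x`. -/
noncomputable def orbitKernel : Kernel X X :=
  (Kernel.id ×ₖ Kernel.const X m).map fun p ↦ p.2 • p.1

instance [IsProbabilityMeasure m] : IsMarkovKernel (orbitKernel m : Kernel X X) :=
  Kernel.IsMarkovKernel.map _ (by fun_prop)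

section SFinite

variable [SFinite m]

lemma orbitKernel_apply (x : X) : orbitKernel m x = m.map (· • x) := by
  rw [orbitKernel, Kernel.map_apply _ (by fun_prop), Kernel.prod_apply, Kernel.const_apply,
    Kernel.id_apply, Measure.dirac_prod, Measure.map_map (by fun_prop) (by fun_prop)]
  rfl

lemma integral_orbitKernel {f : X → ℝ} (hf : StronglyMeasurable f) (x : X) :
    ∫ y, f y ∂orbitKernel m x = ∫ g, f (g • x) ∂m := by
  rw [orbitKernel_apply,
    integral_map (measurable_smul_const x).aemeasurable hf.aestronglyMeasurable]

lemma orbitKernel_smul [MeasurableMul G] [m.IsMulRightInvariant] (g : G) (x : X) :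
    orbitKernel m (g • x) = orbitKernel m x :=
  calc orbitKernel m (g • x)
    _ = m.map (fun h ↦ (h * g) • x) := by simp only [orbitKernel_apply, mul_smul]
    _ = (m.map (· * g)).map (· • x) :=
      (Measure.map_map (measurable_smul_const x) (measurable_mul_const g)).symm
    _ = orbitKernel m x := by rw [map_mul_right_eq_self, orbitKernel_apply]

lemma map_smul_orbitKernel [MeasurableMul G] [m.IsMulLeftInvariant] (g : G) (x : X) :
    (orbitKernel m x).map (g • ·) = orbitKernel m x :=
  calc (orbitKernel m x).map (g • ·)
    _ = m.map (fun h ↦ (g * h) • x) := by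
      rw [orbitKernel_apply, Measure.map_map (measurable_const_smul g) (measurable_smul_const x)]
      simp only [mul_smul, Function.comp_def]
    _ = (m.map (g * ·)).map (· • x) :=
      (Measure.map_map (measurable_smul_const x) (measurable_const_mul g)).symm
    _ = orbitKernel m x := by rw [map_mul_left_eq_self, orbitKernel_apply]

end SFinite

variable [IsProbabilityMeasure m]

lemma orbitKernel_comp {μ : Measure X} [SFinite μ] (hμ : ∀ g : G, μ.map (g • ·) = μ) :
    orbitKernel m ∘ₘ μ = μ := by
  have hshear : MeasurePreserving (fun p : G × X ↦ (p.1, p.1 • p.2)) (m.prod μ) (m.prod μ) :=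
    (MeasurePreserving.id m).skew_product measurable_smul (.of_forall hμ)
  rw [orbitKernel, ← Measure.map_comp _ _ (by fun_prop), ← Measure.compProd_eq_comp_prod,
    Measure.compProd_const]
  exact (measurePreserving_snd.comp (hshear.comp Measure.measurePreserving_swap)).map_eq

end OrbitKernel

section OrbitMap

variable {G X Q : Type*} [Group G] [MulAction G X] [MeasurableSpace X] [MeasurableSpace Q]

/-- `π : X → Q` realizes `Q` as the orbit space of the action of `G` on `X`. -/
structure IsOrbitMap (G : Type*) {X Q : Type*} [SMul G X] [MeasurableSpace X]
    [MeasurableSpace Q] (π : X → Q) : Prop where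
  measurable : Measurable π
  surjective : Function.Surjective π
  apply_eq_iff : ∀ x y, π x = π y ↔ ∃ g : G, g • x = y

namespace IsOrbitMap

variable {π : X → Q} (hπ : IsOrbitMap G π)
include hπ

lemma apply_smul (g : G) (x : X) : π (g • x) = π x :=
  ((hπ.apply_eq_iff x (g • x)).2 ⟨g, rfl⟩).symm

lemma eq_of_smul_eq {α : Type*} {F : X → α} (hF : ∀ (g : G) x, F (g • x) = F x) {x y : X}
    (hxy : π x = π y) : F x = F y := by
  obtain ⟨g, rfl⟩ := (hπ.apply_eq_iff x y).1 hxy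
  exact (hF g x).symm

variable [MeasurableSpace G] [MeasurableSMul₂ G X] [MeasurableMul G] (m : Measure G)
  [IsProbabilityMeasure m] [m.IsMulRightInvariant]

lemma orbitKernel_surjInv (x : X) :
    orbitKernel m (Function.surjInv hπ.surjective (π x)) = orbitKernel m x :=
  hπ.eq_of_smul_eq (orbitKernel_smul m) (Function.surjInv_eq hπ.surjective (π x))

variable [StandardBorelSpace X] [MeasurableSpace.CountablySeparated Q]

/-- The kernel sending a point `q` of the orbit space to the `m`-average over the fibre of `π` over
`q`, obtained by descending `orbitKernel m` along `π`. -/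
noncomputable def fiberKernel : Kernel Q X where
  toFun q := orbitKernel m (Function.surjInv hπ.surjective q)
  measurable' := by
    -- A measurable surjection from a standard Borel space is a quotient map of measurable spaces.
    rw [← hπ.measurable.measurable_comp_iff_of_surjective hπ.surjective]
    have hcomp : (fun q ↦ orbitKernel m (Function.surjInv hπ.surjective q)) ∘ π = orbitKernel m :=
      funext (hπ.orbitKernel_surjInv m)
    rw [hcomp]
    exact (orbitKernel m).measurable

lemma fiberKernel_apply (x : X) : hπ.fiberKernel m (π x) = orbitKernel m x :=
  hπ.orbitKernel_surjInv m x

instance : IsMarkovKernel (hπ.fiberKernel m) where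
  isProbabilityMeasure q := by
    obtain ⟨x, rfl⟩ := hπ.surjective q
    rw [fiberKernel_apply]
    infer_instance

lemma fiberKernel_comp_map {μ : Measure X} [SFinite μ] (hμ : ∀ g : G, μ.map (g • ·) = μ) :
    hπ.fiberKernel m ∘ₘ μ.map π = μ := by
  have hcomap : (hπ.fiberKernel m).comap π hπ.measurable = orbitKernel m :=
    Kernel.ext fun x ↦ hπ.fiberKernel_apply m x
  rw [← Measure.deterministic_comp_eq_map hπ.measurable, Measure.comp_assoc,
    Kernel.comp_deterministic_eq_comap, hcomap, orbitKernel_comp m hμ]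

lemma map_fiberKernel_comp (ρ : Measure Q) : (hπ.fiberKernel m ∘ₘ ρ).map π = ρ := by
  have hmap : (hπ.fiberKernel m).map π = Kernel.id := by
    ext1 q
    obtain ⟨x, rfl⟩ := hπ.surjective q
    have hcomp : π ∘ (fun g : G ↦ g • x) = fun _ ↦ π x := funext fun g ↦ hπ.apply_smul g x
    rw [Kernel.map_apply _ hπ.measurable, fiberKernel_apply, orbitKernel_apply,
      Measure.map_map hπ.measurable (measurable_smul_const x), hcomp, Measure.map_const,
      measure_univ, one_smul, Kernel.id_apply]
  rw [Measure.map_comp _ _ hπ.measurable, hmap, Measure.id_comp]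

lemma map_smul_fiberKernel_comp [m.IsMulLeftInvariant] (ρ : Measure Q) (g : G) :
    (hπ.fiberKernel m ∘ₘ ρ).map (g • ·) = hπ.fiberKernel m ∘ₘ ρ := by
  have hmap : (hπ.fiberKernel m).map (g • ·) = hπ.fiberKernel m := by
    ext1 q
    obtain ⟨x, rfl⟩ := hπ.surjective q
    rw [Kernel.map_apply _ (measurable_const_smul g), fiberKernel_apply, map_smul_orbitKernel]
  rw [Measure.map_comp _ _ (measurable_const_smul g), hmap]

theorem existsUnique_map_eq [m.IsMulLeftInvariant] (ρ : Measure Q) [IsProbabilityMeasure ρ] :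
    ∃! μ : Measure X, (IsProbabilityMeasure μ ∧ ∀ g : G, μ.map (g • ·) = μ) ∧ μ.map π = ρ := by
  refine ⟨hπ.fiberKernel m ∘ₘ ρ, ⟨⟨inferInstance, hπ.map_smul_fiberKernel_comp m ρ⟩,
    hπ.map_fiberKernel_comp m ρ⟩, ?_⟩
  rintro μ ⟨⟨hμ, hinv⟩, rfl⟩
  exact (hπ.fiberKernel_comp_map m hinv).symm

end IsOrbitMap

end OrbitMap

section InvariantLipschitzDist

/-- The greatest quotient metric on the orbit space of an action of `G`, on representatives: it is
the largest distance between the values at `x` and `y` of a `G`-invariant `1`-Lipschitz function. -/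
noncomputable def invariantLipschitzDist (G : Type*) {X : Type*} [PseudoMetricSpace X] [SMul G X]
    (x y : X) : ℝ :=
  sSup {r : ℝ | ∃ f : X → ℝ, LipschitzWith 1 f ∧ (∀ (g : G) (a : X), f (g • a) = f a) ∧
    r = |f x - f y|}

variable {G X : Type*} [PseudoMetricSpace X] [SMul G X]

lemma invariantLipschitzDist_le_dist (x y : X) : invariantLipschitzDist G x y ≤ dist x y := by
  refine Real.sSup_le ?_ dist_nonneg
  rintro _ ⟨f, hf, -, rfl⟩
  exact abs_sub_le_dist_of_lipschitzWith_one hf x y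

lemma abs_sub_le_invariantLipschitzDist {f : X → ℝ} (hf : LipschitzWith 1 f)
    (hinv : ∀ (g : G) (a : X), f (g • a) = f a) (x y : X) :
    |f x - f y| ≤ invariantLipschitzDist G x y := by
  refine le_csSup ⟨dist x y, ?_⟩ ⟨f, hf, hinv, rfl⟩
  rintro _ ⟨f, hf, -, rfl⟩
  exact abs_sub_le_dist_of_lipschitzWith_one hf x y

lemma lipschitzWith_one_of_dist_eq_invariantLipschitzDist {Q : Type*} [PseudoMetricSpace Q]
    {π : X → Q} (hdist : ∀ x y, dist (π x) (π y) = invariantLipschitzDist G x y) :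
    LipschitzWith 1 π :=
  .mk_one fun x y ↦ (hdist x y).trans_le (invariantLipschitzDist_le_dist x y)

end InvariantLipschitzDist

section IsometricAction

variable {G X Q : Type*} [Group G] [MeasurableSpace G] [MetricSpace X] [BoundedSpace X]
  [MeasurableSpace X] [BorelSpace X] [MulAction G X] [IsIsometricSMul G X] [MeasurableSMul₂ G X]
  (m : Measure G) [IsProbabilityMeasure m]

lemma lipschitzWith_integral_orbitKernel {f : X → ℝ} {K : ℝ≥0} (hf : LipschitzWith K f) :
    LipschitzWith K fun x ↦ ∫ y, f y ∂orbitKernel m x := by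
  have hf_int (x : X) : Integrable (fun g : G ↦ f (g • x)) m := by
    have h := integrable_of_lipschitzWith hf (orbitKernel m x)
    rw [orbitKernel_apply] at h
    exact h.comp_measurable (measurable_smul_const x)
  refine .of_dist_le_mul fun x y ↦ ?_
  have hbound (g : G) : ‖f (g • x) - f (g • y)‖ ≤ K * dist x y := by
    simpa [dist_eq_norm] using hf.dist_le_mul (g • x) (g • y)
  simp only [integral_orbitKernel m hf.continuous.stronglyMeasurable]
  rw [dist_eq_norm, ← integral_sub (hf_int x) (hf_int y)]
  simpa using norm_integral_le_of_norm_le_const (μ := m) (.of_forall hbound)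

variable [MeasurableMul G] [m.IsMulRightInvariant] [PolishSpace X] [MetricSpace Q]
  [MeasurableSpace Q]

lemma IsOrbitMap.lipschitzWith_integral_fiberKernel [MeasurableSpace.CountablySeparated Q]
    {π : X → Q} (hπ : IsOrbitMap G π)
    (hdist : ∀ x y, dist (π x) (π y) = invariantLipschitzDist G x y) {f : X → ℝ}
    (hf : LipschitzWith 1 f) : LipschitzWith 1 fun q ↦ ∫ x, f x ∂hπ.fiberKernel m q := by
  refine .mk_one fun p q ↦ ?_
  obtain ⟨x, rfl⟩ := hπ.surjective p
  obtain ⟨y, rfl⟩ := hπ.surjective q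
  rw [Real.dist_eq, hπ.fiberKernel_apply, hπ.fiberKernel_apply, hdist]
  exact abs_sub_le_invariantLipschitzDist (lipschitzWith_integral_orbitKernel m hf)
    (fun g a ↦ by rw [orbitKernel_smul]) x y

variable [BorelSpace Q]

include m in
theorem IsOrbitMap.kantorovichDist_map [BoundedSpace Q] [MeasurableSpace.CountablySeparated Q]
    {π : X → Q} (hπ : IsOrbitMap G π)
    (hdist : ∀ x y, dist (π x) (π y) = invariantLipschitzDist G x y)
    (μ ν : Measure X) [IsProbabilityMeasure μ] [IsProbabilityMeasure ν]
    (hμ : ∀ g : G, μ.map (g • ·) = μ) (hν : ∀ g : G, ν.map (g • ·) = ν) :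
    kantorovichDist (μ.map π) (ν.map π) = kantorovichDist μ ν := by
  refine le_antisymm (kantorovichDist_map_le μ ν
    (lipschitzWith_one_of_dist_eq_invariantLipschitzDist hdist)) ?_
  have := Measure.isProbabilityMeasure_map (μ := μ) hπ.measurable.aemeasurable
  have := Measure.isProbabilityMeasure_map (μ := ν) hπ.measurable.aemeasurable
  calc kantorovichDist μ ν
    _ = kantorovichDist (hπ.fiberKernel m ∘ₘ μ.map π) (hπ.fiberKernel m ∘ₘ ν.map π) := by
      rw [hπ.fiberKernel_comp_map m hμ, hπ.fiberKernel_comp_map m hν]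
    _ ≤ kantorovichDist (μ.map π) (ν.map π) :=
      kantorovichDist_comp_le _ _ fun _ ↦ hπ.lipschitzWith_integral_fiberKernel m hdist

include m in
theorem fix_pushforward_affine_isometry_onto_general [Nonempty X] [m.IsMulLeftInvariant]
    (π : X → Q) (hsurj : Function.Surjective π)
    (hdist : ∀ x y : X, dist (π x) (π y) = invariantLipschitzDist G x y)
    (hfib : ∀ x y : X, π x = π y ↔ ∃ g : G, g • x = y) :
    (∀ μ ν : Measure X, IsProbabilityMeasure μ → IsProbabilityMeasure ν →
        (∀ g : G, μ.map (g • ·) = μ) → (∀ g : G, ν.map (g • ·) = ν) →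
        kantorovichDist (μ.map π) (ν.map π) = kantorovichDist μ ν) ∧
    (∀ ρ : Measure Q, IsProbabilityMeasure ρ →
        ∃! μ : Measure X, (IsProbabilityMeasure μ ∧ ∀ g : G, μ.map (g • ·) = μ) ∧
          μ.map π = ρ) ∧
    (∀ (μ ν : Measure X) (t : ℝ≥0),
        (t • μ + (1 - t) • ν).map π = t • μ.map π + (1 - t) • ν.map π) ∧
    sSup {r : ℝ | ∃ μ ν : Measure X, IsProbabilityMeasure μ ∧ IsProbabilityMeasure ν ∧
        (∀ g : G, μ.map (g • ·) = μ) ∧ (∀ g : G, ν.map (g • ·) = ν) ∧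
        r = kantorovichDist μ ν}
      = Metric.diam (Set.univ : Set Q) := by
  have hlip := lipschitzWith_one_of_dist_eq_invariantLipschitzDist hdist
  have hπ : IsOrbitMap G π := ⟨hlip.continuous.measurable, hsurj, hfib⟩
  have : BoundedSpace Q := ⟨by
    simpa [hsurj.range_eq] using hlip.isBounded_image (Bornology.IsBounded.all univ)⟩
  have : SeparableSpace Q := hsurj.denseRange.separableSpace hlip.continuous
  have : SecondCountableTopology Q := UniformSpace.secondCountable_of_separable Q
  have hiso (μ ν : Measure X) (hμ : IsProbabilityMeasure μ) (hν : IsProbabilityMeasure ν)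
      (hμinv : ∀ g : G, μ.map (g • ·) = μ) (hνinv : ∀ g : G, ν.map (g • ·) = ν) :
      kantorovichDist (μ.map π) (ν.map π) = kantorovichDist μ ν :=
    hπ.kantorovichDist_map m hdist μ ν hμinv hνinv
  refine ⟨hiso, fun ρ _ ↦ hπ.existsUnique_map_eq m ρ, fun μ ν t ↦ ?_, ?_⟩
  · rw [Measure.map_add _ _ hπ.measurable, Measure.map_smul, Measure.map_smul]
  · rw [← sSup_kantorovichDist_eq_diam Q]
    congr 1 with r
    constructor
    · rintro ⟨μ, ν, hμ, hν, hμinv, hνinv, rfl⟩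
      exact ⟨μ.map π, ν.map π, Measure.isProbabilityMeasure_map hπ.measurable.aemeasurable,
        Measure.isProbabilityMeasure_map hπ.measurable.aemeasurable,
        (hiso μ ν hμ hν hμinv hνinv).symm⟩
    · rintro ⟨ρ, σ, hρ, hσ, rfl⟩
      obtain ⟨μ, ⟨⟨hμ, hμinv⟩, rfl⟩, -⟩ := hπ.existsUnique_map_eq m ρ
      obtain ⟨ν, ⟨⟨hν, hνinv⟩, rfl⟩, -⟩ := hπ.existsUnique_map_eq m σ
      exact ⟨μ, ν, hμ, hν, hμinv, hνinv, hiso μ ν hμ hν hμinv hνinv⟩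

end IsometricAction

section IsometryGroup

variable {X : Type*}

/-- The tautological action of the isometry group of `X` on `X`. -/
instance isometryEquivMulAction [PseudoEMetricSpace X] : MulAction (X ≃ᵢ X) X where
  smul Φ x := Φ x
  one_smul _ := rfl
  mul_smul _ _ _ := rfl

instance [PseudoEMetricSpace X] : IsIsometricSMul (X ≃ᵢ X) X where
  isometry_smul Φ := Φ.isometry

variable [MetricSpace X]

/-- The topology of pointwise convergence of an isometry and of its inverse. Recording the inverse
makes the isometry group of `X` a closed subset of `(X → X) × (X → X)`. -/
instance isometryEquivTopologicalSpace : TopologicalSpace (X ≃ᵢ X) :=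
  .induced (fun Φ ↦ ((Φ : X → X), (Φ.symm : X → X))) inferInstance

lemma isEmbedding_isometryEquiv_coe_symm :
    Topology.IsEmbedding fun Φ : X ≃ᵢ X ↦ ((Φ : X → X), (Φ.symm : X → X)) where
  eq_induced := rfl
  injective _ _ h := DFunLike.coe_injective (Prod.ext_iff.1 h).1

lemma continuous_isometryEquiv_apply (x : X) : Continuous fun Φ : X ≃ᵢ X ↦ Φ x :=
  (continuous_apply x).comp
    (continuous_fst.comp isEmbedding_isometryEquiv_coe_symm.continuous)

lemma continuous_isometryEquiv_symm_apply (x : X) : Continuous fun Φ : X ≃ᵢ X ↦ Φ.symm x :=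
  (continuous_apply x).comp
    (continuous_snd.comp isEmbedding_isometryEquiv_coe_symm.continuous)

instance : ContinuousSMul (X ≃ᵢ X) X where
  continuous_smul := continuous_prod_of_continuous_lipschitzWith' (Function.uncurry (· • ·)) 1
    (fun Φ ↦ Φ.isometry.lipschitz) continuous_isometryEquiv_apply

instance : ContinuousInv (X ≃ᵢ X) where
  continuous_inv := isEmbedding_isometryEquiv_coe_symm.continuous_iff.2 <|
    (continuous_pi continuous_isometryEquiv_symm_apply).prodMk
      (continuous_pi continuous_isometryEquiv_apply)

instance : IsTopologicalGroup (X ≃ᵢ X) where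
  continuous_mul := isEmbedding_isometryEquiv_coe_symm.continuous_iff.2 <| by
    refine (continuous_pi fun x ↦ ?_).prodMk (continuous_pi fun x ↦ ?_)
    · exact continuous_fst.smul (continuous_snd.smul continuous_const)
    · exact continuous_snd.inv.smul (continuous_fst.inv.smul continuous_const)

lemma range_isometryEquiv_coe_symm :
    range (fun Φ : X ≃ᵢ X ↦ ((Φ : X → X), (Φ.symm : X → X))) =
      {p | ∀ x y, dist (p.1 x) y = dist x (p.2 y)} := by
  ext ⟨f, g⟩
  constructor
  · rintro ⟨Φ, hΦ⟩ x y
    obtain ⟨rfl, rfl⟩ := Prod.mk.inj hΦ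
    rw [← Φ.dist_eq x, Φ.apply_symm_apply]
  · intro h
    have hadj : ∀ x y, dist (f x) y = dist x (g y) := h
    have hfg (y : X) : f (g y) = y := by rw [← dist_eq_zero, hadj, dist_self]
    have hgf (x : X) : g (f x) = x := by rw [← dist_eq_zero, dist_comm, ← hadj, dist_self]
    have hf : Isometry f := .of_dist_eq fun x y ↦ by rw [hadj, hgf]
    exact ⟨⟨⟨f, g, hgf, hfg⟩, hf⟩, rfl⟩

instance [CompactSpace X] : CompactSpace (X ≃ᵢ X) := by
  refine Topology.IsClosedEmbedding.compactSpace ⟨isEmbedding_isometryEquiv_coe_symm, ?_⟩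
  rw [range_isometryEquiv_coe_symm]
  simp only [ofPred_forall]
  exact isClosed_iInter fun x ↦ isClosed_iInter fun y ↦ isClosed_eq (by fun_prop) (by fun_prop)

/-- The Borel σ-algebra of the topology of pointwise convergence. -/
instance isometryEquivMeasurableSpace : MeasurableSpace (X ≃ᵢ X) := borel _

instance : BorelSpace (X ≃ᵢ X) := ⟨rfl⟩

end IsometryGroup

section CompactGroup

variable (G : Type*) [Group G] [TopologicalSpace G] [IsTopologicalGroup G] [CompactSpace G]
  [MeasurableSpace G] [BorelSpace G]

instance : IsProbabilityMeasure (haarMeasure (⊤ : PositiveCompacts G)) :=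
  ⟨Measure.haarMeasure_self⟩

instance : (haarMeasure (⊤ : PositiveCompacts G)).IsMulRightInvariant where
  map_mul_right_eq_self g := by
    have := Measure.isProbabilityMeasure_map (μ := haarMeasure (⊤ : PositiveCompacts G))
      (measurable_mul_const g).aemeasurable
    exact Measure.isHaarMeasure_eq_of_isProbabilityMeasure _ _

end CompactGroup

/-- Let X be a nonempty compact metric space and let (Q, π) realize the
orbit space X⁽¹⁾ with its greatest quotient metric d⁽¹⁾ (π is the orbit projection).
Then μ ↦ μ ∘ π⁻¹ is an affine isometry of Fix(P(X)) — the set of probability measures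
invariant under all surjective isometries of X — onto P(Q), both equipped with the
Kantorovich metric. In particular δ(Fix(P(X))) = δ(X⁽¹⁾). -/
theorem fix_pushforward_affine_isometry_onto {X Q : Type*}
    [MetricSpace X] [CompactSpace X] [Nonempty X] [MeasurableSpace X] [BorelSpace X]
    [MetricSpace Q] [MeasurableSpace Q] [BorelSpace Q]
    (π : X → Q) (hsurj : Function.Surjective π) (hcont : Continuous π)
    (hdist : ∀ x y : X, dist (π x) (π y) = orbitDist x y)
    (hfib : ∀ x y : X, π x = π y ↔ ∃ Φ : X ≃ᵢ X, Φ x = y) :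
    (∀ μ ν : Measure X, IsProbabilityMeasure μ → IsProbabilityMeasure ν →
        (∀ Φ : X ≃ᵢ X, μ.map Φ = μ) → (∀ Φ : X ≃ᵢ X, ν.map Φ = ν) →
        kantorovichDist (μ.map π) (ν.map π) = kantorovichDist μ ν) ∧
    (∀ ρ : Measure Q, IsProbabilityMeasure ρ →
        ∃! μ : Measure X, (IsProbabilityMeasure μ ∧ ∀ Φ : X ≃ᵢ X, μ.map Φ = μ) ∧
          μ.map π = ρ) ∧
    (∀ (μ ν : Measure X) (t : ℝ≥0),
        (t • μ + (1 - t) • ν).map π = t • μ.map π + (1 - t) • ν.map π) ∧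
    sSup {r : ℝ | ∃ μ ν : Measure X, IsProbabilityMeasure μ ∧ IsProbabilityMeasure ν ∧
        (∀ Φ : X ≃ᵢ X, μ.map Φ = μ) ∧ (∀ Φ : X ≃ᵢ X, ν.map Φ = ν) ∧
        r = kantorovichDist μ ν}
      = Metric.diam (Set.univ : Set Q) :=
  fix_pushforward_affine_isometry_onto_general (haarMeasure (⊤ : PositiveCompacts (X ≃ᵢ X)))
    π hsurj hdist hfib
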